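/- Let G be a 4-pyramid free 2-tree. If G contains exactly one 3-pyramid as an induced subgraph (equivalently, there is exactly one edge uv of G with |N_G(u) ∩ N_G(v)| = 3 and no edge whose endpoints have 4 or more common neighbors), then G has a Hamiltonian path. -/

import Mathlib

open SimpleGraph

/-- `IsTwoTree V G` : the simple graph `G` on `ℕ` with support (vertex set) `V` is a 2-tree,
defined inductively: a single edge is a 2-tree, and adding a new vertex `z` adjacent to
exactly the two endpoints `u, v` of an existing edge yields a 2-tree. -/
inductive IsTwoTree : Finset ℕ → SimpleGraph ℕ → Prop
  | base (u v : ℕ) (huv : u ≠ v) :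
      IsTwoTree {u, v} (fromEdgeSet {s(u, v)})
  | grow {V : Finset ℕ} {G : SimpleGraph ℕ} (hG : IsTwoTree V G)
      (u v z : ℕ) (huv : G.Adj u v) (hz : z ∉ V) (hzu : z ≠ u) (hzv : z ≠ v) :
      IsTwoTree (insert z V) (G ⊔ fromEdgeSet {s(z, u), s(z, v)})


/-- `H` (with vertex set `W`) is an `n`-pyramid: a 2-tree on `n + 2` vertices having an
edge `uv` such that `u` and `v` have exactly `n` common neighbors. -/
def IsNPyramid (n : ℕ) (W : Finset ℕ) (H : SimpleGraph ℕ) : Prop :=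
  IsTwoTree W H ∧ W.card = n + 2 ∧
    ∃ u v, H.Adj u v ∧ (H.neighborSet u ∩ H.neighborSet v).ncard = n

/-- `G` (with vertex set `V`) contains an `n`-pyramid as an induced subgraph: there is a
set of vertices `W ⊆ V` on which `G` induces an `n`-pyramid. -/
def ContainsNPyramid (V : Finset ℕ) (G : SimpleGraph ℕ) (n : ℕ) : Prop :=
  ∃ (W : Finset ℕ) (H : SimpleGraph ℕ), W ⊆ V ∧ IsNPyramid n W H ∧
    ∀ a b, a ∈ W → b ∈ W → (G.Adj a b ↔ H.Adj a b)

/-- `p` is a Hamiltonian path of the graph `G` with vertex set `V`: a path whose support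
is exactly `V`. -/
def IsHamPathOn (V : Finset ℕ) {G : SimpleGraph ℕ} {s t : ℕ} (p : G.Walk s t) : Prop :=
  p.IsPath ∧ ∀ x, x ∈ p.support ↔ x ∈ V

/-- `p` is a Hamiltonian cycle of the graph `G` with vertex set `V`: a cycle whose support
is exactly `V`. -/
def IsHamCycleOn (V : Finset ℕ) {G : SimpleGraph ℕ} {a : ℕ} (p : G.Walk a a) : Prop :=
  p.IsCycle ∧ ∀ x, x ∈ p.support ↔ x ∈ V

/-!
Write the *codegree* of an edge for the number of common neighbours of its ends, that is, the
number of triangles containing it. A 2-tree contains no `K₄`, so an edge of codegree at least 4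
yields an induced 4-pyramid; hence in the graph at hand `uv` has codegree 3 and every other edge
has codegree at most 2.

The idea is that `G` is then made of three triangulated polygons glued along `uv`. The outer
boundary of each, with `uv` removed, is a path from `u` to `v` through its part, and following the
first path from the vertex after `u` to `v`, the second back to `u`, and the third until just
before `v` is a Hamiltonian path of `G`.

The decomposition is obtained by induction on the construction of the 2-tree, in the form
`IsTwoTree.exists_isBundle`: for every edge `uv` such that all other edges have codegree at most 2,
there are internally disjoint `u`–`v` paths, as many as the codegree of `uv`, that cover all
vertices and traverse every edge other than `uv` of codegree at most 1 (`IsBundle`). Let a new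
vertex `z` be joined to the ends of an edge `ab`.
* If `uv = ab`, the path `u, z, v` is added (`IsBundle.grow_same`).
* If `uv` is another old edge, `ab` has codegree at most 1 before the step, so it is traversed by
  one of the paths, and `z` is inserted between `a` and `b` (`IsBundle.grow_insert`). The edge `ab`
  itself then need not be traversed any more: it already lay in a triangle, by
  `IsTwoTree.codeg_pos`, and now lies in two.
* If `uv` is one of the new edges, say `az`, its codegree is 1, and a spanning path from `a` to `b`
  is prolonged to `z` (`IsBundle.grow_new`).
-/

/-! ### Codegrees and the growth step -/

/-- The number of common neighbours of `x` and `y`. If there are infinitely many this is the junk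
value `0`, which does not happen in a 2-tree. -/
noncomputable def codeg (G : SimpleGraph ℕ) (x y : ℕ) : ℕ :=
  (G.neighborSet x ∩ G.neighborSet y).ncard

/-- The graph obtained from `G` by joining `z` to `a` and `b`. -/
def attach (G : SimpleGraph ℕ) (a b z : ℕ) : SimpleGraph ℕ :=
  G ⊔ fromEdgeSet {s(z, a), s(z, b)}

theorem codeg_comm (G : SimpleGraph ℕ) (x y : ℕ) : codeg G x y = codeg G y x := by
  rw [codeg, codeg, Set.inter_comm]

theorem codeg_congr (G : SimpleGraph ℕ) {x y x' y' : ℕ} (h : s(x, y) = s(x', y')) :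
    codeg G x y = codeg G x' y' := by
  rcases Sym2.eq_iff.1 h with ⟨rfl, rfl⟩ | ⟨rfl, rfl⟩
  · rfl
  · exact codeg_comm ..

theorem attach_comm (G : SimpleGraph ℕ) (a b z : ℕ) : attach G a b z = attach G b a z := by
  rw [attach, attach, Set.pair_comm]

theorem attach_adj {G : SimpleGraph ℕ} {a b z : ℕ} (hza : z ≠ a) (hzb : z ≠ b) {x y : ℕ} :
    (attach G a b z).Adj x y ↔
      G.Adj x y ∨ (x = z ∧ (y = a ∨ y = b)) ∨ (y = z ∧ (x = a ∨ x = b)) := by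
  simp only [attach, sup_adj, fromEdgeSet_adj, Set.mem_insert_iff, Set.mem_singleton_iff,
    Sym2.eq_iff]
  grind

theorem IsTwoTree.mem_of_adj {V : Finset ℕ} {G : SimpleGraph ℕ} (h : IsTwoTree V G) :
    ∀ {x y : ℕ}, G.Adj x y → x ∈ V ∧ y ∈ V := by
  induction h with
  | base u v huv =>
    intro x y hxy
    simp only [fromEdgeSet_adj, Set.mem_singleton_iff, Sym2.eq_iff] at hxy
    grind
  | @grow V G hG u v z huv hz hzu hzv ih =>
    intro x y hxy
    have := (attach_adj hzu hzv).1 hxy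
    grind

theorem IsTwoTree.commonNeighbors_finite {V : Finset ℕ} {G : SimpleGraph ℕ}
    (h : IsTwoTree V G) (x y : ℕ) : (G.neighborSet x ∩ G.neighborSet y).Finite :=
  V.finite_toSet.subset fun _ hw => (h.mem_of_adj hw.1).2

/-- A 2-tree contains no `K₄`: when a vertex is added, it has only two neighbours. -/
theorem IsTwoTree.cliqueFree {V : Finset ℕ} {G : SimpleGraph ℕ} (h : IsTwoTree V G) :
    ∀ {p q r t : ℕ}, G.Adj p q → G.Adj p r → G.Adj p t → G.Adj q r → G.Adj q t → ¬ G.Adj r t := by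
  induction h with
  | base u v huv =>
    intro p q r t
    simp only [fromEdgeSet_adj, Set.mem_singleton_iff, Sym2.eq_iff]
    grind
  | @grow V G hG u v z huv hz hzu hzv ih =>
    intro p q r t h1 h2 h3 h4 h5 h6
    have hz' : ∀ x, ¬ G.Adj z x := fun x hx => hz (hG.mem_of_adj hx).1
    have hz'' : ∀ x, ¬ G.Adj x z := fun x hx => hz' x hx.symm
    have e1 := h1.ne
    have e2 := h2.ne
    have e3 := h3.ne
    have e4 := h4.ne
    have e5 := h5.ne
    have e6 := h6.ne
    have k1 := (attach_adj hzu hzv).1 h1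
    have k2 := (attach_adj hzu hzv).1 h2
    have k3 := (attach_adj hzu hzv).1 h3
    have k4 := (attach_adj hzu hzv).1 h4
    have k5 := (attach_adj hzu hzv).1 h5
    have k6 := (attach_adj hzu hzv).1 h6
    have := @ih p q r t
    by_cases p = z
    · grind
    by_cases q = z
    · grind
    by_cases r = z
    · grind
    by_cases t = z
    · grind
    grind

/-- The hypotheses of a growth step: `z` is a new vertex, to be joined to both ends of the
edge `ab`. -/
structure Fresh (V : Finset ℕ) (G : SimpleGraph ℕ) (a b z : ℕ) : Prop where
  tree : IsTwoTree V G
  adj : G.Adj a b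
  notMem : z ∉ V

namespace Fresh

variable {V : Finset ℕ} {G : SimpleGraph ℕ} {a b z : ℕ}

theorem symm (h : Fresh V G a b z) : Fresh V G b a z := ⟨h.tree, h.adj.symm, h.notMem⟩

theorem ne_of_mem (h : Fresh V G a b z) {x : ℕ} (hx : x ∈ V) : z ≠ x := by
  rintro rfl; exact h.notMem hx

theorem ne_left (h : Fresh V G a b z) : z ≠ a := h.ne_of_mem (h.tree.mem_of_adj h.adj).1

theorem ne_right (h : Fresh V G a b z) : z ≠ b := h.symm.ne_left

theorem attach_adj (h : Fresh V G a b z) {x y : ℕ} : (attach G a b z).Adj x y ↔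
      G.Adj x y ∨ (x = z ∧ (y = a ∨ y = b)) ∨ (y = z ∧ (x = a ∨ x = b)) :=
  _root_.attach_adj h.ne_left h.ne_right

theorem not_adj (h : Fresh V G a b z) (x : ℕ) : ¬ G.Adj z x :=
  fun hx => h.notMem (h.tree.mem_of_adj hx).1

theorem not_adj' (h : Fresh V G a b z) (x : ℕ) : ¬ G.Adj x z :=
  fun hx => h.not_adj x hx.symm

theorem codeg_new (h : Fresh V G a b z) : codeg (attach G a b z) z a = 1 := by
  rw [codeg, Set.ncard_eq_one]
  refine ⟨b, ?_⟩
  ext w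
  simp only [Set.mem_inter_iff, mem_neighborSet, h.attach_adj, Set.mem_singleton_iff]
  have := h.not_adj
  have := h.adj
  have := h.adj.ne
  have := h.ne_left
  have := h.ne_right
  have : ¬ G.Adj a a := G.irrefl
  grind

theorem codeg_base (h : Fresh V G a b z) : codeg (attach G a b z) a b = codeg G a b + 1 := by
  rw [codeg, codeg, ← Set.ncard_insert_of_notMem (a := z) _ (h.tree.commonNeighbors_finite a b)]
  · congr 1
    ext w
    simp only [Set.mem_inter_iff, mem_neighborSet, h.attach_adj, Set.mem_insert_iff]
    have := h.ne_left
    have := h.ne_right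
    grind
  · exact fun hw => h.not_adj' a hw.1

theorem codeg_old (h : Fresh V G a b z) {x y : ℕ} (hxy : G.Adj x y) (hne : s(x, y) ≠ s(a, b)) :
    codeg (attach G a b z) x y = codeg G x y := by
  rw [codeg, codeg]
  congr 1
  ext w
  simp only [Set.mem_inter_iff, mem_neighborSet, h.attach_adj]
  have := h.not_adj
  have := h.not_adj'
  have := hxy.ne
  rw [Ne, Sym2.eq_iff] at hne
  grind

theorem codeg_le (h : Fresh V G a b z) {x y : ℕ} (hxy : G.Adj x y) :
    codeg G x y ≤ codeg (attach G a b z) x y := by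
  by_cases hne : s(x, y) = s(a, b)
  · rw [codeg_congr _ hne, codeg_congr _ hne, h.codeg_base]; omega
  · rw [h.codeg_old hxy hne]

theorem isTwoTree (h : Fresh V G a b z) : IsTwoTree (insert z V) (attach G a b z) :=
  .grow h.tree a b z h.adj h.notMem h.ne_left h.ne_right

end Fresh

/-- Once a 2-tree has a second edge, every edge lies in a triangle. -/
theorem IsTwoTree.codeg_pos {V : Finset ℕ} {G : SimpleGraph ℕ} (h : IsTwoTree V G) :
    ∀ {x y x' y' : ℕ}, G.Adj x y → G.Adj x' y' → s(x, y) ≠ s(x', y') → 1 ≤ codeg G x y := by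
  induction h with
  | base u v huv =>
    intro x y x' y' h1 h2 h3
    simp only [fromEdgeSet_adj, Set.mem_singleton_iff] at h1 h2
    exact absurd (h1.1.trans h2.1.symm) h3
  | @grow V G hG a b z hab hz hza hzb ih =>
    intro x y x' y' h1 _ _
    have F : Fresh V G a b z := ⟨hG, hab, hz⟩
    change 1 ≤ codeg (attach G a b z) x y
    rcases F.attach_adj.1 h1 with h | ⟨rfl, rfl | rfl⟩ | ⟨rfl, rfl | rfl⟩
    · by_cases hne : s(x, y) = s(a, b)
      · rw [codeg_congr _ hne, F.codeg_base]; omega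
      · exact (ih h hab hne).trans (F.codeg_le h)
    · rw [F.codeg_new]
    · rw [attach_comm, F.symm.codeg_new]
    · rw [codeg_comm, F.codeg_new]
    · rw [codeg_comm, attach_comm, F.symm.codeg_new]

/-! ### Bundles of paths -/

/-- `x` and `y` occur consecutively (in either order) on one of the paths `u, L, v`, `L ∈ Ls`. -/
def Consec (u v : ℕ) (Ls : List (List ℕ)) (x y : ℕ) : Prop :=
  ∃ L₁ L₂, L₁ ++ L₂ ∈ Ls ∧ s(x, y) = s(L₁.getLastD u, L₂.headD v)

/-- `Ls` lists the interiors of internally disjoint paths from `u` to `v` that together cover `V`;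
there is one path for each common neighbour of `u` and `v`, and every edge other than `uv` lying in
at most one triangle is traversed by one of the paths. -/
structure IsBundle (V : Finset ℕ) (G : SimpleGraph ℕ) (u v : ℕ) (Ls : List (List ℕ)) : Prop where
  chain : ∀ L ∈ Ls, List.IsChain G.Adj (u :: (L ++ [v]))
  nodup : (u :: v :: Ls.flatten).Nodup
  mem_iff : ∀ x, x ∈ V ↔ x ∈ u :: v :: Ls.flatten
  length_eq : Ls.length = codeg G u v
  consec : ∀ x y, G.Adj x y → s(x, y) ≠ s(u, v) → codeg G x y ≤ 1 → Consec u v Ls x y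

/-- The path `u, L₁ ++ L₂, v`, cut into `u, L₁` and `L₂, v`. -/
theorem isChain_append_iff {G : SimpleGraph ℕ} {u v : ℕ} (L₁ L₂ : List ℕ) :
    List.IsChain G.Adj (u :: ((L₁ ++ L₂) ++ [v])) ↔
      List.IsChain G.Adj (u :: L₁) ∧ List.IsChain G.Adj (L₂ ++ [v]) ∧
        G.Adj (L₁.getLastD u) (L₂.headD v) := by
  rw [List.append_assoc, ← List.cons_append, List.isChain_append]
  cases L₂ <;> simp [List.getLastD_eq_getLast?, List.getLast?_cons]

theorem Consec.symm {u v x y : ℕ} {Ls : List (List ℕ)} (h : Consec u v Ls x y) :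
    Consec v u (Ls.map List.reverse) x y := by
  obtain ⟨L₁, L₂, hm, he⟩ := h
  refine ⟨L₂.reverse, L₁.reverse, ?_, ?_⟩
  · rw [← List.reverse_append]
    exact List.mem_map_of_mem hm
  · rw [he, Sym2.eq_swap]
    simp [List.getLastD_eq_getLast?, List.headD_eq_head?_getD]

theorem perm_flatten_map_reverse (Ls : List (List ℕ)) :
    (Ls.map List.reverse).flatten.Perm Ls.flatten := by
  induction Ls with
  | nil => simp
  | cons L Ls ih => simpa using (List.reverse_perm L).append ih

theorem IsBundle.symm {V : Finset ℕ} {G : SimpleGraph ℕ} {u v : ℕ} {Ls : List (List ℕ)}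
    (h : IsBundle V G u v Ls) : IsBundle V G v u (Ls.map List.reverse) := by
  have hp : (v :: u :: (Ls.map List.reverse).flatten).Perm (u :: v :: Ls.flatten) :=
    (List.Perm.swap ..).trans (((perm_flatten_map_reverse Ls).cons _).cons _)
  refine ⟨?_, hp.nodup_iff.2 h.nodup, fun x => (h.mem_iff x).trans hp.mem_iff.symm, ?_, ?_⟩
  · intro L hL
    obtain ⟨M, hM, rfl⟩ := List.mem_map.1 hL
    have := List.isChain_reverse.2 ((h.chain M hM).imp fun _ _ h => h.symm)
    simpa [flip] using this
  · rw [List.length_map, h.length_eq, codeg_comm]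
  · intro x y hxy hne hc
    exact (h.consec x y hxy (by rwa [Sym2.eq_swap (a := u)]) hc).symm

theorem isBundle_base {u v : ℕ} (huv : u ≠ v) :
    IsBundle {u, v} (fromEdgeSet {s(u, v)}) u v [] := by
  refine ⟨by simp, by simpa using huv, by simp, ?_, ?_⟩
  · rw [codeg, List.length_nil, eq_comm,
      Set.ncard_eq_zero ((IsTwoTree.base u v huv).commonNeighbors_finite u v)]
    · ext w
      simp only [Set.mem_inter_iff, mem_neighborSet, fromEdgeSet_adj, Set.mem_singleton_iff,
        Sym2.eq_iff]
      grind
  · intro x y hxy hne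
    simp only [fromEdgeSet_adj, Set.mem_singleton_iff] at hxy
    exact absurd hxy.1 hne

section Grow

variable {V : Finset ℕ} {G : SimpleGraph ℕ} {a b z u v : ℕ} {Ls : List (List ℕ)}

theorem Fresh.isChain (F : Fresh V G a b z) {l : List ℕ} (h : List.IsChain G.Adj l) :
    List.IsChain (attach G a b z).Adj l :=
  h.imp fun _ _ h => F.attach_adj.2 (.inl h)

/-- Growing on the edge `ab` itself adds the path `a, z, b` to a bundle from `a` to `b`. -/
theorem IsBundle.grow_same (F : Fresh V G a b z) (h : IsBundle V G a b Ls) :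
    IsBundle (insert z V) (attach G a b z) a b ([z] :: Ls) := by
  have hz : z ∉ a :: b :: Ls.flatten := fun hz => F.notMem ((h.mem_iff z).2 hz)
  have hp : (a :: b :: ([z] :: Ls).flatten).Perm (z :: a :: b :: Ls.flatten) := by
    simpa using List.perm_middle (l₁ := [a, b])
  refine ⟨?_, hp.nodup_iff.2 (List.nodup_cons.2 ⟨hz, h.nodup⟩), ?_, ?_, ?_⟩
  · intro L hL
    rcases List.mem_cons.1 hL with rfl | hL
    · simp [F.attach_adj]
    · exact F.isChain (h.chain L hL)
  · intro x
    rw [hp.mem_iff, Finset.mem_insert, h.mem_iff, ← List.mem_cons]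
  · rw [List.length_cons, h.length_eq, F.codeg_base]
  · intro x y hxy hne hc
    rcases F.attach_adj.1 hxy with hxy | ⟨rfl, rfl | rfl⟩ | ⟨rfl, rfl | rfl⟩
    · obtain ⟨L₁, L₂, hm, he⟩ := h.consec x y hxy hne ((F.codeg_le hxy).trans hc)
      exact ⟨L₁, L₂, List.mem_cons_of_mem _ hm, he⟩
    · exact ⟨[], [x], by simp, by simp [Sym2.eq_swap]⟩
    · exact ⟨[x], [], by simp, by simp⟩
    · exact ⟨[], [y], by simp, by simp⟩
    · exact ⟨[y], [], by simp, by simp [Sym2.eq_swap]⟩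

/-- If `ab` lies in at most one triangle of `G`, a bundle from `a` to `b` is a single spanning path
(the edge `ab` itself if `G` has no other edge), and `z` may be appended to it. -/
theorem IsBundle.grow_new (F : Fresh V G a b z) (h : IsBundle V G a b Ls)
    (hlen : codeg G a b ≤ 1) :
    IsBundle (insert z V) (attach G a b z) a z [Ls.flatten ++ [b]] := by
  have hz : z ∉ a :: b :: Ls.flatten := fun hz => F.notMem ((h.mem_iff z).2 hz)
  have hp : (a :: z :: [Ls.flatten ++ [b]].flatten).Perm (z :: a :: b :: Ls.flatten) := by
    refine (List.Perm.swap ..).trans (((?_ : List.Perm _ _).cons _).cons _)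
    simp
  refine ⟨?_, hp.nodup_iff.2 (List.nodup_cons.2 ⟨hz, h.nodup⟩), ?_, ?_, ?_⟩
  · intro L hL
    rw [List.mem_singleton] at hL
    subst hL
    have hpath : List.IsChain G.Adj (a :: (Ls.flatten ++ [b])) := by
      match Ls, h with
      | [], _ => simpa using F.adj
      | [L], h => simpa using h.chain L (by simp)
      | _ :: _ :: _, h => have := h.length_eq; simp at this; omega
    have := isChain_append_iff (G := attach G a b z) (u := a) (v := z) (Ls.flatten ++ [b]) []
    rw [List.append_nil] at this
    exact this.2 ⟨F.isChain hpath, by simp, by simp [F.attach_adj]⟩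
  · intro x
    rw [hp.mem_iff, Finset.mem_insert, h.mem_iff, ← List.mem_cons]
  · rw [List.length_singleton, codeg_comm, F.codeg_new]
  · intro x y hxy hne hc
    have hlast : Consec a z [Ls.flatten ++ [b]] b z :=
      ⟨Ls.flatten ++ [b], [], by simp, by simp⟩
    have hlast' : Consec a z [Ls.flatten ++ [b]] z b := by
      obtain ⟨L₁, L₂, hm, he⟩ := hlast
      exact ⟨L₁, L₂, hm, Sym2.eq_swap.trans he⟩
    rcases F.attach_adj.1 hxy with hxy | ⟨rfl, rfl | rfl⟩ | ⟨rfl, rfl | rfl⟩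
    · by_cases hab : s(x, y) = s(a, b)
      · -- Here `ab` lies in no triangle of `G`, so the bundle is empty.
        rw [codeg_congr _ hab, F.codeg_base, ← h.length_eq] at hc
        obtain rfl : Ls = [] := List.eq_nil_of_length_eq_zero (by omega)
        exact ⟨[], [b], by simp, by simpa using hab⟩
      · obtain ⟨L₁, L₂, hm, he⟩ := h.consec x y hxy hab ((F.codeg_le hxy).trans hc)
        match Ls, h, hm with
        | [L], _, hm =>
          rw [List.mem_singleton] at hm
          refine ⟨L₁, L₂ ++ [b], by simp [← hm], ?_⟩
          rw [he]
          cases L₂ <;> simp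
        | _ :: _ :: _, h, _ => have := h.length_eq; simp at this; omega
    · exact absurd Sym2.eq_swap hne
    · exact hlast'
    · exact absurd rfl hne
    · exact hlast

/-- In a bundle, `z` may be inserted between consecutive vertices `a, b` of one of the paths. No
bound on the codegree of `ab` is needed, since `ab` ends up in at least two triangles. -/
theorem IsBundle.grow_insert_aux (F : Fresh V G a b z) (huv : G.Adj u v)
    {A B : List (List ℕ)} {L₁ L₂ : List ℕ}
    (h : IsBundle V G u v (A ++ (L₁ ++ L₂) :: B)) (hne : s(a, b) ≠ s(u, v))
    (ha : a = L₁.getLastD u) (hb : b = L₂.headD v) :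
    IsBundle (insert z V) (attach G a b z) u v (A ++ (L₁ ++ z :: L₂) :: B) := by
  have hz : z ∉ u :: v :: (A ++ (L₁ ++ L₂) :: B).flatten :=
    fun hz => F.notMem ((h.mem_iff z).2 hz)
  have hp : (u :: v :: (A ++ (L₁ ++ z :: L₂) :: B).flatten).Perm
      (z :: u :: v :: (A ++ (L₁ ++ L₂) :: B).flatten) := by
    simpa using List.perm_middle (l₁ := u :: v :: (A.flatten ++ L₁))
      (l₂ := L₂ ++ B.flatten) (a := z)
  have hpos : 1 ≤ codeg G a b := F.tree.codeg_pos F.adj huv hne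
  refine ⟨?_, hp.nodup_iff.2 (List.nodup_cons.2 ⟨hz, h.nodup⟩), ?_, ?_, ?_⟩
  · intro L hL
    rw [List.mem_append, List.mem_cons] at hL
    rcases hL with hL | rfl | hL
    · exact F.isChain (h.chain L (by simp [hL]))
    · obtain ⟨h1, h2, -⟩ := (isChain_append_iff L₁ L₂).1 (h.chain (L₁ ++ L₂) (by simp))
      refine (isChain_append_iff L₁ (z :: L₂)).2 ⟨F.isChain h1, ?_, ?_⟩
      · rw [List.cons_append, List.isChain_cons]
        refine ⟨?_, F.isChain h2⟩
        intro y hy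
        have : y = b := by cases L₂ <;> simp_all
        rw [F.attach_adj]; grind
      · rw [← ha, F.attach_adj]; simp
    · exact F.isChain (h.chain L (by simp [hL]))
  · intro x
    rw [hp.mem_iff, Finset.mem_insert, h.mem_iff, ← List.mem_cons]
  · rw [F.codeg_old huv hne.symm, ← h.length_eq]
    simp
  · intro x y hxy hxne hc
    have hmem : L₁ ++ z :: L₂ ∈ A ++ (L₁ ++ z :: L₂) :: B := by simp
    have e1 : s(a, z) = s(L₁.getLastD u, (z :: L₂).headD v) := by simp [ha]
    have e2 : s(z, b) = s((L₁ ++ [z]).getLastD u, L₂.headD v) := by simp [hb]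
    have hmem' : (L₁ ++ [z]) ++ L₂ ∈ A ++ (L₁ ++ z :: L₂) :: B := by simp
    rcases F.attach_adj.1 hxy with hxy | ⟨rfl, rfl | rfl⟩ | ⟨rfl, rfl | rfl⟩
    · have hab : s(x, y) ≠ s(a, b) := by
        intro hab
        rw [codeg_congr _ hab, F.codeg_base] at hc
        omega
      obtain ⟨M₁, M₂, hm, he⟩ := h.consec x y hxy hxne ((F.codeg_le hxy).trans hc)
      rw [List.mem_append, List.mem_cons] at hm
      rcases hm with hm | hm | hm
      · exact ⟨M₁, M₂, by simp [hm], he⟩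
      · -- Compare the place of the edge `xy` on this path with the place where `z` goes in.
        rcases List.append_eq_append_iff.1 hm with ⟨T, rfl, rfl⟩ | ⟨T, rfl, rfl⟩
        · cases T with
          | nil => exact absurd (by simpa [ha, hb] using he) hab
          | cons t T => exact ⟨M₁, t :: T ++ z :: L₂, by simp, by simpa using he⟩
        · cases T using List.reverseRecOn with
          | nil => exact absurd (by simpa [ha, hb] using he) hab
          | append_singleton T t =>
            refine ⟨L₁ ++ z :: (T ++ [t]), M₂, by simp, ?_⟩
            rw [he]
            simp [List.getLastD_eq_getLast?, List.getLast?_append, List.getLast?_cons]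
      · exact ⟨M₁, M₂, by simp [hm], he⟩
    · exact ⟨_, _, hmem, Sym2.eq_swap.trans e1⟩
    · exact ⟨_, _, hmem', e2⟩
    · exact ⟨_, _, hmem, e1⟩
    · exact ⟨_, _, hmem', Sym2.eq_swap.trans e2⟩

/-- If `ab` differs from `uv` and lies in at most one triangle, it is traversed by the bundle
from `u` to `v`, and `z` may be inserted there. -/
theorem IsBundle.grow_insert (F : Fresh V G a b z) (huv : G.Adj u v) (h : IsBundle V G u v Ls)
    (hne : s(a, b) ≠ s(u, v)) (hc : codeg G a b ≤ 1) :
    ∃ Ls', IsBundle (insert z V) (attach G a b z) u v Ls' := by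
  obtain ⟨L₁, L₂, hm, he⟩ := h.consec a b F.adj hne hc
  obtain ⟨A, B, rfl⟩ := List.append_of_mem hm
  rcases Sym2.eq_iff.1 he with ⟨ha, hb⟩ | ⟨ha, hb⟩
  · exact ⟨_, h.grow_insert_aux F huv hne ha hb⟩
  · rw [attach_comm]
    exact ⟨_, h.grow_insert_aux F.symm huv (by rwa [Sym2.eq_swap]) hb ha⟩

end Grow

/-- A 2-tree has a bundle from `u` to `v` for every edge `uv` such that all other edges lie in at
most two triangles. -/
theorem IsTwoTree.exists_isBundle {V : Finset ℕ} {G : SimpleGraph ℕ} (h : IsTwoTree V G) :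
    ∀ {u v : ℕ}, G.Adj u v → (∀ x y, G.Adj x y → s(x, y) ≠ s(u, v) → codeg G x y ≤ 2) →
      ∃ Ls, IsBundle V G u v Ls := by
  induction h with
  | base p q hpq =>
    intro u v huv _
    simp only [fromEdgeSet_adj, Set.mem_singleton_iff, Sym2.eq_iff] at huv
    rcases huv.1 with ⟨rfl, rfl⟩ | ⟨rfl, rfl⟩
    · exact ⟨_, isBundle_base hpq⟩
    · exact ⟨_, (isBundle_base hpq).symm⟩
  | @grow V G hG a b z hab hz hza hzb ih =>
    intro u v huv hle
    have F : Fresh V G a b z := ⟨hG, hab, hz⟩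
    change ∃ Ls, IsBundle (insert z V) (attach G a b z) u v Ls
    change (attach G a b z).Adj u v at huv
    change ∀ x y, (attach G a b z).Adj x y → _ → codeg (attach G a b z) x y ≤ 2 at hle
    have hle' : ∀ x y, G.Adj x y → s(x, y) ≠ s(u, v) → codeg G x y ≤ 2 := fun x y hxy hne =>
      (F.codeg_le hxy).trans (hle x y (F.attach_adj.2 (.inl hxy)) hne)
    have hcab : s(a, b) ≠ s(u, v) → codeg G a b ≤ 1 := by
      intro hne
      have := hle a b (F.attach_adj.2 (.inl hab)) hne
      rw [F.codeg_base] at this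
      omega
    by_cases hG' : G.Adj u v
    · by_cases hne : s(a, b) = s(u, v)
      · have hbd : ∃ Ls, IsBundle V G a b Ls := ih hab (hne ▸ hle')
        obtain ⟨Ls, hL⟩ := hbd
        have := hL.grow_same F
        rcases Sym2.eq_iff.1 hne with ⟨rfl, rfl⟩ | ⟨rfl, rfl⟩
        · exact ⟨_, this⟩
        · exact ⟨_, this.symm⟩
      · obtain ⟨Ls, hL⟩ := ih hG' hle'
        exact hL.grow_insert F hG' hne (hcab hne)
    · have hne : ∀ {x y}, G.Adj x y → s(x, y) ≠ s(u, v) := by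
        intro x y hxy he
        rcases Sym2.eq_iff.1 he with ⟨rfl, rfl⟩ | ⟨rfl, rfl⟩
        · exact hG' hxy
        · exact hG' hxy.symm
      obtain ⟨Ls, hL⟩ := ih hab fun x y hxy _ => hle' x y hxy (hne hxy)
      have hab1 := hcab (hne hab)
      have h1 := hL.grow_new F hab1
      have h2 := hL.symm.grow_new F.symm (by rwa [codeg_comm])
      rw [attach_comm] at h2
      rcases F.attach_adj.1 huv with hxy | ⟨rfl, rfl | rfl⟩ | ⟨rfl, rfl | rfl⟩
      · exact absurd hxy hG'
      · exact ⟨_, h1.symm⟩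
      · exact ⟨_, h2.symm⟩
      · exact ⟨_, h1⟩
      · exact ⟨_, h2⟩

/-! ### Pyramids -/

/-- Since 2-trees contain no `K₄`, four common neighbours of an edge are pairwise nonadjacent,
so together with the edge they induce a 4-pyramid. -/
theorem IsTwoTree.containsNPyramid_four {V : Finset ℕ} {G : SimpleGraph ℕ} (h : IsTwoTree V G)
    {a b : ℕ} (hab : G.Adj a b) (hc : 4 ≤ codeg G a b) : ContainsNPyramid V G 4 := by
  obtain ⟨S, hS, hcard⟩ := Set.exists_subset_card_eq hc
  obtain ⟨w₁, w₂, w₃, w₄, h12, h13, h14, h23, h24, h34, rfl⟩ := Set.ncard_eq_four.1 hcard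
  simp only [Set.insert_subset_iff, Set.singleton_subset_iff, Set.mem_inter_iff,
    mem_neighborSet] at hS
  obtain ⟨⟨a1, b1⟩, ⟨a2, b2⟩, ⟨a3, b3⟩, a4, b4⟩ := hS
  have n12 := h.cliqueFree hab a1 a2 b1 b2
  have n13 := h.cliqueFree hab a1 a3 b1 b3
  have n14 := h.cliqueFree hab a1 a4 b1 b4
  have n23 := h.cliqueFree hab a2 a3 b2 b3
  have n24 := h.cliqueFree hab a2 a4 b2 b4
  have n34 := h.cliqueFree hab a3 a4 b3 b4
  have F₁ : Fresh {a, b} (fromEdgeSet {s(a, b)}) a b w₁ :=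
    ⟨.base a b hab.ne, by simp [hab.ne], by simp [a1.ne', b1.ne']⟩
  have F₂ : Fresh (insert w₁ {a, b}) (attach (fromEdgeSet {s(a, b)}) a b w₁) a b w₂ :=
    ⟨F₁.isTwoTree, F₁.attach_adj.2 (.inl F₁.adj), by simp [a2.ne', b2.ne', h12.symm]⟩
  have F₃ := Fresh.mk (z := w₃) F₂.isTwoTree (F₂.attach_adj.2 (.inl F₂.adj))
    (by simp [a3.ne', b3.ne', h13.symm, h23.symm])
  have F₄ := Fresh.mk (z := w₄) F₃.isTwoTree (F₃.attach_adj.2 (.inl F₃.adj))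
    (by simp [a4.ne', b4.ne', h14.symm, h24.symm, h34.symm])
  refine ⟨_, _, ?_, ⟨F₄.isTwoTree, ?_, a, b, F₄.attach_adj.2 (.inl F₄.adj), ?_⟩, ?_⟩
  · simp only [Finset.insert_subset_iff, Finset.singleton_subset_iff]
    exact ⟨(h.mem_of_adj a4).2, (h.mem_of_adj a3).2, (h.mem_of_adj a2).2, (h.mem_of_adj a1).2,
      h.mem_of_adj hab⟩
  · rw [Finset.card_insert_of_notMem F₄.notMem, Finset.card_insert_of_notMem F₃.notMem,
      Finset.card_insert_of_notMem F₂.notMem, Finset.card_insert_of_notMem F₁.notMem,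
      Finset.card_pair hab.ne]
  · change codeg _ a b = 4
    rw [F₄.codeg_base, F₃.codeg_base, F₂.codeg_base, F₁.codeg_base,
      ← (isBundle_base hab.ne).length_eq]
    rfl
  · intro x y hx hy
    have hirr : ∀ w, ¬ G.Adj w w := fun _ => G.irrefl
    simp only [F₄.attach_adj, F₃.attach_adj, F₂.attach_adj, F₁.attach_adj, fromEdgeSet_adj,
      Set.mem_singleton_iff, Sym2.eq_iff]
    simp only [Finset.mem_insert, Finset.mem_singleton] at hx hy
    rcases hx with rfl | rfl | rfl | rfl | rfl | rfl <;>
      rcases hy with rfl | rfl | rfl | rfl | rfl | rfl <;>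
      grind [SimpleGraph.adj_comm]

/-- Let `G` be a 4-pyramid free 2-tree containing exactly one 3-pyramid, i.e. there is
exactly one edge `uv` with `|N_G(u) ∩ N_G(v)| = 3` (and, being 4-pyramid free, no edge
whose endpoints have 4 or more common neighbors).  Then `G` has a Hamiltonian path. -/
theorem one_three_pyramid_implies_hamiltonian_path
    (V : Finset ℕ) (G : SimpleGraph ℕ) (hG : IsTwoTree V G)
    (h4 : ¬ ContainsNPyramid V G 4)
    (u v : ℕ) (huv : G.Adj u v)
    (h3 : (G.neighborSet u ∩ G.neighborSet v).ncard = 3)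
    (huniq : ∀ a b, G.Adj a b → (G.neighborSet a ∩ G.neighborSet b).ncard = 3 →
      s(a, b) = s(u, v)) :
    ∃ (s t : ℕ) (p : G.Walk s t), IsHamPathOn V p := by
  have hle : ∀ x y, G.Adj x y → s(x, y) ≠ s(u, v) → codeg G x y ≤ 2 := by
    intro x y hxy hne
    by_contra! hc
    rcases Nat.lt_or_ge (codeg G x y) 4 with h | h
    · exact hne (huniq x y hxy (by change codeg G x y = 3; omega))
    · exact h4 (hG.containsNPyramid_four hxy h)
  obtain ⟨Ls, hL⟩ := hG.exists_isBundle huv hle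
  obtain ⟨A, B, C, rfl⟩ := List.length_eq_three.1 (hL.length_eq.trans h3)
  have hA := hL.chain A (by simp)
  have hB := hL.chain B (by simp)
  have hC := hL.chain C (by simp)
  -- Along `A` to `v`, back along `B` to `u`, then out along `C`.
  have hchain : List.IsChain G.Adj (A ++ v :: (B.reverse ++ u :: C)) := by
    rw [List.isChain_split]
    refine ⟨(List.isChain_cons.1 hA).2, ?_⟩
    rw [← List.cons_append, List.isChain_split]
    refine ⟨?_, ?_⟩
    · have := List.isChain_reverse.2 (hB.imp fun _ _ h => h.symm)
      simpa [flip] using this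
    · rw [← List.cons_append] at hC
      exact (List.isChain_append.1 hC).1
  have hp : (A ++ v :: (B.reverse ++ u :: C)).Perm (u :: v :: [A, B, C].flatten) := by
    have h1 : (A ++ v :: (B.reverse ++ u :: C)).Perm (v :: u :: (A ++ (B.reverse ++ C))) := by
      refine List.perm_middle.trans (.cons _ ?_)
      rw [← List.append_assoc, ← List.append_assoc]
      exact List.perm_middle
    refine h1.trans ((List.Perm.swap ..).trans (.cons _ (.cons _ ?_)))
    simpa using ((List.reverse_perm B).append_right C).append_left A
  have hnil : A ++ v :: (B.reverse ++ u :: C) ≠ [] := by simp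
  refine ⟨_, _, Walk.ofSupport _ hnil hchain, ?_, ?_⟩
  · rw [Walk.isPath_def, Walk.support_ofSupport]
    exact hp.nodup_iff.2 hL.nodup
  · intro x
    rw [Walk.support_ofSupport, hp.mem_iff, hL.mem_iff]
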